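/- For every real constant c > 0 and every integer m > 0, there exists n > m such that φ(n) ≥ (2/9 − c)·n, where φ(n) = max{ω(w) : w rich, |w| = n} and ω(w) is the minimal length of u such that wu is rich and wu can be extended in at least two ways. -/

import Mathlib

def Rich {A : Type*} (w : List A) : Prop :=
  {p : List A | p.reverse = p ∧ p <:+: w}.ncard = w.length + 1
/-- `v` can be extended (to a rich word) in at least two ways. -/
def TwoWays {A : Type*} (v : List A) : Prop :=
  ∃ x y : A, x ≠ y ∧ Rich (v ++ [x]) ∧ Rich (v ++ [y])

/-!
Appending a letter to a word creates at most one new palindromic factor, so a word is rich exactly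
when each of its letters creates one. For `ψ = episturmian a` this property passes from `w` to
`a :: ψ w` and back. Over `{a, b}`, if every letter of a continuation `u` of `w` is forced by
richness and follows a word that is not a palindrome, then the same holds for the continuation
`ψ u` of `b :: b :: a :: ψ w`: a letter coming from `u` is forced because richness of `a :: ψ w`
is richness of `w`, and the `a` after a letter `b` is forced because otherwise the new palindrome
ending in `bb` would have to reach back to the initial `bb`, making a word a palindrome that is
not one.

Iterating this with the two letters exchanged at each step, the letter counts grow like Fibonacci
numbers, and a seed pair can be chosen so that `u.length / w.length` is always at least `3 / 13`,
which exceeds `2 / 9`. The other letters of a larger alphabet are put in front of `w`, once each.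
They are then never allowed in the forced part, and their constant cost is absorbed because
`13 * u.length - 3 * w.length` tends to infinity.
-/

section Rich

variable {α β : Type*} {w u p q : List α} {x : α}

theorem prefix_of_suffix_of_palindrome (hp : p.Palindrome) (hq : q.Palindrome) (h : p <:+ q) :
    p <+: q := by
  rwa [← List.reverse_prefix, hp.reverse_eq, hq.reverse_eq] at h

theorem palindrome_cons_concat_iff : (x :: (w ++ [x])).Palindrome ↔ w.Palindrome := by
  simp [List.Palindrome.iff_reverse_eq]

/-- The set of palindromic factors of `w`, the empty word included. Its size is at most
`w.length + 1`, and `Rich w` says that this bound is attained. -/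
def palindromicFactors (w : List α) : Set (List α) := {p | p.reverse = p ∧ p <:+: w}

theorem rich_iff_ncard_palindromicFactors : Rich w ↔ (palindromicFactors w).ncard = w.length + 1 :=
  Iff.rfl

theorem mem_palindromicFactors : p ∈ palindromicFactors w ↔ p.Palindrome ∧ p <:+: w :=
  and_congr_left' List.Palindrome.iff_reverse_eq.symm

theorem palindromicFactors_nil : palindromicFactors ([] : List α) = {[]} := by
  ext p
  rw [mem_palindromicFactors, List.infix_nil, Set.mem_singleton_iff, and_iff_right_iff_imp]
  rintro rfl
  exact .nil

theorem palindromicFactors_reverse : palindromicFactors w.reverse = palindromicFactors w := by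
  ext p
  simp only [mem_palindromicFactors, and_congr_right_iff]
  intro hp
  rw [← List.reverse_infix, List.reverse_reverse, hp.reverse_eq]

theorem palindromicFactors_map {f : α → β} (hf : Function.Injective f) :
    palindromicFactors (w.map f) = List.map f '' palindromicFactors w := by
  ext p
  simp only [mem_palindromicFactors, List.Palindrome.iff_reverse_eq, Set.mem_image]
  constructor
  · rintro ⟨hp, hpw⟩
    obtain ⟨q, hq, rfl⟩ := List.infix_map_iff.1 hpw
    rw [← List.map_reverse] at hp
    exact ⟨q, ⟨List.map_injective_iff.2 hf hp, hq⟩, rfl⟩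
  · rintro ⟨q, ⟨hq, hqw⟩, rfl⟩
    exact ⟨by rw [← List.map_reverse, hq], hqw.map f⟩

theorem finite_palindromicFactors (w : List α) : (palindromicFactors w).Finite :=
  (List.finite_toSet w.sublists).subset fun _ hp => List.mem_sublists.2 hp.2.sublist

/-- `p` is a palindrome contributed by the last letter of `w ++ [x]`: a palindromic suffix of
`w ++ [x]` that does not occur in `w`. -/
structure IsNewPalindrome (w : List α) (x : α) (p : List α) : Prop where
  palindrome : p.Palindrome
  suffix : p <:+ w ++ [x]
  not_infix : ¬ p <:+: w

theorem IsNewPalindrome.exists_eq_concat (h : IsNewPalindrome w x p) :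
    ∃ t, p = t ++ [x] ∧ t <:+ w := by
  rcases List.suffix_concat_iff.1 h.suffix with rfl | ht
  · exact absurd List.nil_infix h.not_infix
  · exact ht

theorem IsNewPalindrome.exists_eq_cons (h : IsNewPalindrome w x p) : ∃ t, p = x :: t := by
  obtain ⟨t, rfl, -⟩ := h.exists_eq_concat
  refine ⟨t.reverse, ?_⟩
  rw [← h.palindrome.reverse_eq, List.reverse_concat]

theorem IsNewPalindrome.length_le (h : IsNewPalindrome w x p) (hq : q.Palindrome)
    (hqw : q <:+ w ++ [x]) : q.length ≤ p.length := by
  by_contra! hlt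
  have hpq : p <+: q :=
    prefix_of_suffix_of_palindrome h.palindrome hq
      (List.suffix_of_suffix_length_le h.suffix hqw hlt.le)
  rcases List.suffix_concat_iff.1 hqw with rfl | ⟨t, rfl, ht⟩
  · simp at hlt
  rcases List.prefix_concat_iff.1 hpq with rfl | hpt
  · exact hlt.false
  · exact h.not_infix (hpt.isInfix.trans ht.isInfix)

theorem IsNewPalindrome.unique (hp : IsNewPalindrome w x p) (hq : IsNewPalindrome w x q) :
    p = q :=
  have hlen := hq.length_le hp.palindrome hp.suffix
  (List.suffix_of_suffix_length_le hp.suffix hq.suffix hlen).eq_of_length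
    (hlen.antisymm (hp.length_le hq.palindrome hq.suffix))

theorem IsNewPalindrome.palindromicFactors_concat (h : IsNewPalindrome w x p) :
    palindromicFactors (w ++ [x]) = insert p (palindromicFactors w) := by
  ext q
  rw [Set.mem_insert_iff, mem_palindromicFactors, mem_palindromicFactors, List.infix_concat_iff]
  constructor
  · rintro ⟨hq, hqs⟩
    by_cases hqw : q <:+: w
    · exact .inr ⟨hq, hqw⟩
    · exact .inl (IsNewPalindrome.unique ⟨hq, hqs.resolve_right hqw, hqw⟩ h)
  · rintro (rfl | ⟨hq, hqw⟩)
    · exact ⟨h.palindrome, .inl h.suffix⟩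
    · exact ⟨hq, .inr hqw⟩

theorem palindromicFactors_concat_of_forall_not (h : ∀ p, ¬ IsNewPalindrome w x p) :
    palindromicFactors (w ++ [x]) = palindromicFactors w := by
  ext q
  rw [mem_palindromicFactors, mem_palindromicFactors, List.infix_concat_iff]
  refine and_congr_right fun hq => or_iff_right_of_imp fun hqs => ?_
  by_contra hqw
  exact h q ⟨hq, hqs, hqw⟩

theorem IsNewPalindrome.ncard_palindromicFactors_concat (h : IsNewPalindrome w x p) :
    (palindromicFactors (w ++ [x])).ncard = (palindromicFactors w).ncard + 1 := by
  rw [h.palindromicFactors_concat]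
  exact Set.ncard_insert_of_notMem (fun hp => h.not_infix hp.2) (finite_palindromicFactors w)

theorem ncard_palindromicFactors_le (w : List α) :
    (palindromicFactors w).ncard ≤ w.length + 1 := by
  induction w using List.reverseRecOn with
  | nil => simp [palindromicFactors_nil]
  | append_singleton w x ih =>
    rw [List.length_append, List.length_singleton]
    by_cases h : ∃ p, IsNewPalindrome w x p
    · obtain ⟨p, hp⟩ := h
      rw [hp.ncard_palindromicFactors_concat]
      omega
    · rw [palindromicFactors_concat_of_forall_not (not_exists.1 h)]
      omega

theorem rich_nil : Rich ([] : List α) := by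
  simp [rich_iff_ncard_palindromicFactors, palindromicFactors_nil]

theorem rich_concat_iff : Rich (w ++ [x]) ↔ Rich w ∧ ∃ p, IsNewPalindrome w x p := by
  simp only [rich_iff_ncard_palindromicFactors, List.length_append, List.length_singleton]
  by_cases h : ∃ p, IsNewPalindrome w x p
  · obtain ⟨p, hp⟩ := h
    rw [hp.ncard_palindromicFactors_concat, add_left_inj]
    exact (and_iff_left ⟨p, hp⟩).symm
  · rw [palindromicFactors_concat_of_forall_not (not_exists.1 h)]
    have := ncard_palindromicFactors_le w
    exact iff_of_false (by omega) fun hr => h hr.2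

theorem rich_reverse_iff : Rich w.reverse ↔ Rich w := by
  rw [rich_iff_ncard_palindromicFactors, rich_iff_ncard_palindromicFactors,
    palindromicFactors_reverse, List.length_reverse]

theorem rich_map_iff {f : α → β} (hf : Function.Injective f) : Rich (w.map f) ↔ Rich w := by
  rw [rich_iff_ncard_palindromicFactors, rich_iff_ncard_palindromicFactors,
    palindromicFactors_map hf, Set.ncard_image_of_injective _ (List.map_injective_iff.2 hf),
    List.length_map]

theorem Rich.cons (hw : Rich w) (hp : p.Palindrome) (hpw : p <+: x :: w) (hpn : ¬ p <:+: w) :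
    Rich (x :: w) := by
  rw [← rich_reverse_iff, List.reverse_cons]
  refine rich_concat_iff.2 ⟨rich_reverse_iff.2 hw, p, hp, ?_, ?_⟩
  · rwa [← List.reverse_cons, ← List.reverse_prefix, List.reverse_reverse, hp.reverse_eq]
  · rwa [← List.reverse_infix, List.reverse_reverse, hp.reverse_eq]

theorem Rich.of_prefix (hw : Rich w) (h : u <+: w) : Rich u := by
  obtain ⟨t, rfl⟩ := h
  induction t using List.reverseRecOn with
  | nil => rwa [List.append_nil] at hw
  | append_singleton t x ih =>
    rw [← List.append_assoc, rich_concat_iff] at hw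
    exact ih hw.1

theorem Rich.of_suffix (hw : Rich w) (h : u <:+ w) : Rich u :=
  rich_reverse_iff.1 ((rich_reverse_iff.2 hw).of_prefix (List.reverse_prefix.2 h))

theorem IsNewPalindrome.notMem_or_exists_suffix (h : IsNewPalindrome w x p) :
    x ∉ w ∨ ∃ q : List α, q.Palindrome ∧ x :: q <:+ w ∧ ¬ x :: (q ++ [x]) <:+: w := by
  obtain ⟨t, ht, htw⟩ := h.exists_eq_concat
  obtain ⟨hp, -, hpn⟩ := h
  cases hp with
  | nil => simp at hpn
  | singleton y =>
    obtain rfl : y = x := by simpa using (List.append_inj' (s₁ := []) ht rfl).2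
    exact .inl fun hy => hpn ((List.singleton_infix_iff _ _).2 hy)
  | @cons_concat y q hq =>
    rw [← List.cons_append] at ht
    obtain ⟨rfl, hyx⟩ := List.append_inj' ht rfl
    obtain rfl : y = x := by simpa using hyx
    exact .inr ⟨q, hq, htw, hpn⟩

theorem coe_toFinset_filter_palindrome [DecidableEq α] (w : List α) :
    (((w.tails.flatMap List.inits).filter fun p => p.Palindrome).toFinset : Set (List α)) =
      palindromicFactors w := by
  ext p
  rw [mem_palindromicFactors, List.infix_iff_prefix_suffix]
  simp [and_comm]

theorem rich_iff_card [DecidableEq α] : Rich w ↔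
    ((w.tails.flatMap List.inits).filter fun p => p.Palindrome).toFinset.card = w.length + 1 := by
  rw [rich_iff_ncard_palindromicFactors, ← coe_toFinset_filter_palindrome, Set.ncard_coe_finset]

instance [DecidableEq α] (w : List α) : Decidable (Rich w) :=
  decidable_of_iff' _ rich_iff_card

end Rich

section Episturmian

variable {α : Type*} [DecidableEq α] {a x y : α} {p q w : List α}

/-- The elementary episturmian morphism of the letter `a`, which fixes `a` and sends every other
letter `x` to `xa`. The words `a :: episturmian a w` are the ones that inherit the palindromic
structure of `w`. -/
def episturmian (a : α) (w : List α) : List α :=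
  w.flatMap fun x => if x = a then [a] else [x, a]

local notation "ψ" => episturmian

theorem episturmian_nil : ψ a [] = [] := rfl

theorem episturmian_cons_self : ψ a (a :: w) = a :: ψ a w := by
  simp [episturmian]

theorem episturmian_cons_of_ne (hx : x ≠ a) : ψ a (x :: w) = x :: a :: ψ a w := by
  simp [episturmian, hx]

theorem episturmian_append (u v : List α) : ψ a (u ++ v) = ψ a u ++ ψ a v :=
  List.flatMap_append

theorem cons_episturmian_concat_self : a :: ψ a (w ++ [a]) = a :: ψ a w ++ [a] := by
  simp [episturmian]

theorem cons_episturmian_concat_of_ne (hx : x ≠ a) :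
    a :: ψ a (w ++ [x]) = a :: ψ a w ++ [x] ++ [a] := by
  simp [episturmian, hx]

theorem count_self_episturmian : (ψ a w).count a = w.length := by
  induction w with
  | nil => rfl
  | cons x w ih =>
    by_cases hx : x = a
    · subst hx
      simp [episturmian_cons_self, ih]
    · simp [episturmian_cons_of_ne hx, ih, hx]

theorem count_episturmian_of_ne (hx : x ≠ a) : (ψ a w).count x = w.count x := by
  induction w with
  | nil => rfl
  | cons y w ih =>
    by_cases hy : y = a
    · subst hy
      simp [episturmian_cons_self, ih, hx.symm]
    · simp [episturmian_cons_of_ne hy, ih, List.count_cons, hx.symm]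

theorem reverse_cons_episturmian : (a :: ψ a w).reverse = a :: ψ a w.reverse := by
  induction w with
  | nil => rfl
  | cons x w ih =>
    rw [List.reverse_cons (a := x)]
    by_cases hx : x = a
    · subst hx
      rw [cons_episturmian_concat_self, ← ih, episturmian_cons_self, List.reverse_cons]
    · rw [cons_episturmian_concat_of_ne hx, ← ih, episturmian_cons_of_ne hx]
      simp

theorem exists_cons_episturmian_eq_concat (a : α) (w : List α) :
    ∃ t, a :: ψ a w = t ++ [a] :=
  ⟨(ψ a w.reverse).reverse, by
    rw [← List.reverse_cons, reverse_cons_episturmian, List.reverse_reverse]⟩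

theorem cons_episturmian_prefix_iff : a :: ψ a p <+: a :: ψ a w ↔ p <+: w := by
  refine ⟨fun h => ?_, ?_⟩
  · induction p generalizing w with
    | nil => exact List.nil_prefix
    | cons y p ih =>
      rcases w with _ | ⟨z, w⟩
      · by_cases hy : y = a <;> simp [episturmian, hy] at h
      by_cases hy : y = a <;> by_cases hz : z = a
      · subst hy hz
        simp only [episturmian_cons_self, List.cons_prefix_cons, true_and] at h ih ⊢
        exact ih h
      · simp [episturmian_cons_of_ne hz, hy, episturmian_cons_self, Ne.symm hz] at h
      · simp [episturmian_cons_of_ne hy, hz, episturmian_cons_self, hy] at h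
      · simp only [episturmian_cons_of_ne hy, episturmian_cons_of_ne hz, List.cons_prefix_cons,
          true_and] at h ih ⊢
        exact ⟨h.1, ih h.2⟩
  · rintro ⟨t, rfl⟩
    rw [episturmian_append, ← List.cons_append]
    exact List.prefix_append _ _

theorem cons_episturmian_suffix_iff : a :: ψ a p <:+ a :: ψ a w ↔ p <:+ w := by
  rw [← List.reverse_prefix, reverse_cons_episturmian, reverse_cons_episturmian,
    cons_episturmian_prefix_iff, List.reverse_prefix]

theorem cons_episturmian_infix_iff : a :: ψ a p <:+: a :: ψ a w ↔ p <:+: w := by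
  induction w with
  | nil =>
    rw [List.infix_cons_iff, episturmian_nil, ← episturmian_nil (a := a),
      cons_episturmian_prefix_iff]
    simp [episturmian_nil]
  | cons x w ih =>
    rw [List.infix_cons_iff, cons_episturmian_prefix_iff, List.infix_cons_iff (a := x), ← ih]
    refine or_congr_right ?_
    by_cases hx : x = a
    · subst hx
      rw [episturmian_cons_self]
    · rw [episturmian_cons_of_ne hx, List.infix_cons_iff, or_iff_right]
      exact fun h => hx (List.cons_prefix_cons.1 h).1.symm

theorem cons_episturmian_injective (a : α) : Function.Injective fun w => a :: ψ a w := by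
  intro u v (h : a :: ψ a u = a :: ψ a v)
  have huv : u <+: v := cons_episturmian_prefix_iff.1 (by rw [h])
  have hvu : v <+: u := cons_episturmian_prefix_iff.1 (by rw [h])
  exact huv.eq_of_length_le hvu.length_le

theorem cons_episturmian_palindrome_iff : (a :: ψ a p).Palindrome ↔ p.Palindrome := by
  rw [List.Palindrome.iff_reverse_eq, List.Palindrome.iff_reverse_eq, reverse_cons_episturmian]
  exact (cons_episturmian_injective a).eq_iff

theorem exists_eq_cons_episturmian_of_suffix (h : a :: q <:+ a :: ψ a w) :
    ∃ p, a :: q = a :: ψ a p := by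
  induction w with
  | nil => exact ⟨[], by simpa [episturmian_nil, List.suffix_cons_iff] using h⟩
  | cons x w ih =>
    rcases List.suffix_cons_iff.1 h with h | h
    · exact ⟨x :: w, h⟩
    by_cases hx : x = a
    · subst hx
      rw [episturmian_cons_self] at h
      exact ih h
    · rw [episturmian_cons_of_ne hx, List.suffix_cons_iff] at h
      exact ih (h.resolve_left fun h => hx (List.cons.inj h).1.symm)

theorem cons_suffix_cons_episturmian (hx : x ≠ a) (h : x :: q <:+ a :: ψ a w) :
    a :: x :: q <:+ a :: ψ a w := by
  induction w with
  | nil => simp [episturmian_nil, List.suffix_cons_iff, hx] at h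
  | cons y w ih =>
    replace h := (List.suffix_cons_iff.1 h).resolve_left fun h => hx (List.cons.inj h).1
    by_cases hy : y = a
    · subst hy
      rw [episturmian_cons_self] at h ⊢
      exact (ih h).trans (List.suffix_cons _ _)
    · rw [episturmian_cons_of_ne hy] at h ⊢
      rcases List.suffix_cons_iff.1 h with h | h
      · rw [h]
      · exact (ih h).trans (List.suffix_append [a, y] _)

theorem cons_infix_cons_episturmian (hx : x ≠ a) (h : x :: q <:+: a :: ψ a w) :
    a :: x :: q <:+: a :: ψ a w := by
  obtain ⟨s, t, h⟩ := h
  have hs : x :: (q ++ t) <:+ a :: ψ a w := ⟨s, by rw [← h]; simp⟩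
  exact List.IsInfix.trans ⟨[], t, by simp⟩ (cons_suffix_cons_episturmian hx hs).isInfix

theorem not_pair_infix_cons_episturmian (hx : x ≠ a) (hy : y ≠ a) :
    ¬ [x, y] <:+: a :: ψ a w := by
  induction w with
  | nil => simp [episturmian_nil, List.infix_cons_iff, hx]
  | cons z w ih =>
    by_cases hz : z = a
    · subst hz
      simp [episturmian_cons_self, List.infix_cons_iff (l₂ := z :: ψ z w), hx, ih]
    · rw [episturmian_cons_of_ne hz, List.infix_cons_iff, List.infix_cons_iff]
      simp [hx, hy, ih]

theorem suffix_cons_episturmian_concat_iff (hx : x ≠ a) :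
    x :: q <:+ a :: ψ a w ++ [x] ↔ a :: (x :: q ++ [a]) <:+ a :: ψ a (w ++ [x]) := by
  rw [cons_episturmian_concat_of_ne hx, ← List.suffix_append_self_iff (l₃ := [a])]
  refine ⟨fun h => ?_, (List.suffix_cons _ _).trans⟩
  rw [← cons_episturmian_concat_of_ne hx] at h ⊢
  exact cons_suffix_cons_episturmian hx h

theorem palindrome_infix_cons_episturmian_iff (hx : x ≠ a) (hq : (x :: q).Palindrome) :
    x :: q <:+: a :: ψ a w ↔ a :: (x :: q ++ [a]) <:+: a :: ψ a w := by
  refine ⟨fun h => ?_, List.IsInfix.trans ⟨[a], [a], by simp⟩⟩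
  have hleft : x :: (q ++ [a]) <:+: a :: ψ a w.reverse := by
    rw [← reverse_cons_episturmian, ← List.reverse_infix, List.reverse_reverse,
      ← List.cons_append, List.reverse_concat, hq.reverse_eq]
    exact cons_infix_cons_episturmian hx h
  have hright := cons_infix_cons_episturmian hx hleft
  rwa [← List.cons_append, ← (palindrome_cons_concat_iff.2 hq).reverse_eq,
    ← reverse_cons_episturmian, List.reverse_infix] at hright

theorem isNewPalindrome_cons_episturmian_self_iff :
    IsNewPalindrome (a :: ψ a w) a (a :: ψ a p) ↔ IsNewPalindrome w a p := by
  constructor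
  · rintro ⟨hp, hpw, hpn⟩
    rw [← cons_episturmian_concat_self] at hpw
    exact ⟨cons_episturmian_palindrome_iff.1 hp, cons_episturmian_suffix_iff.1 hpw,
      mt cons_episturmian_infix_iff.2 hpn⟩
  · rintro ⟨hp, hpw, hpn⟩
    refine ⟨cons_episturmian_palindrome_iff.2 hp, ?_, mt cons_episturmian_infix_iff.1 hpn⟩
    rw [← cons_episturmian_concat_self]
    exact cons_episturmian_suffix_iff.2 hpw

theorem isNewPalindrome_cons_episturmian_iff_of_ne (hx : x ≠ a)
    (hqp : a :: (x :: q ++ [a]) = a :: ψ a p) :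
    IsNewPalindrome (a :: ψ a w) x (x :: q) ↔ IsNewPalindrome w x p := by
  have hpal : (x :: q).Palindrome ↔ p.Palindrome := by
    rw [← palindrome_cons_concat_iff, hqp, cons_episturmian_palindrome_iff]
  have hsuf : x :: q <:+ a :: ψ a w ++ [x] ↔ p <:+ w ++ [x] := by
    rw [suffix_cons_episturmian_concat_iff hx, hqp, cons_episturmian_suffix_iff]
  have hinf (hq : (x :: q).Palindrome) : x :: q <:+: a :: ψ a w ↔ p <:+: w := by
    rw [palindrome_infix_cons_episturmian_iff hx hq, hqp, cons_episturmian_infix_iff]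
  constructor
  · rintro ⟨hq, hqw, hqn⟩
    exact ⟨hpal.1 hq, hsuf.1 hqw, mt (hinf hq).2 hqn⟩
  · rintro ⟨hp, hpw, hpn⟩
    exact ⟨hpal.2 hp, hsuf.2 hpw, mt (hinf (hpal.2 hp)).1 hpn⟩

theorem exists_isNewPalindrome_cons_episturmian_iff :
    (∃ p, IsNewPalindrome (a :: ψ a w) x p) ↔ ∃ p, IsNewPalindrome w x p := by
  by_cases hx : x = a
  · subst hx
    refine ⟨?_, fun ⟨p, hp⟩ => ⟨_, isNewPalindrome_cons_episturmian_self_iff.2 hp⟩⟩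
    rintro ⟨r, hr⟩
    obtain ⟨q, rfl⟩ := hr.exists_eq_cons
    have hsuf := hr.suffix
    rw [← cons_episturmian_concat_self] at hsuf
    obtain ⟨p, hp⟩ := exists_eq_cons_episturmian_of_suffix hsuf
    exact ⟨p, isNewPalindrome_cons_episturmian_self_iff.1 (hp ▸ hr)⟩
  · constructor
    · rintro ⟨r, hr⟩
      obtain ⟨q, rfl⟩ := hr.exists_eq_cons
      obtain ⟨p, hp⟩ := exists_eq_cons_episturmian_of_suffix
        ((suffix_cons_episturmian_concat_iff hx).1 hr.suffix)
      exact ⟨p, (isNewPalindrome_cons_episturmian_iff_of_ne hx hp).1 hr⟩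
    · rintro ⟨p, hp⟩
      obtain ⟨p', rfl⟩ := hp.exists_eq_cons
      obtain ⟨q, hq⟩ := exists_cons_episturmian_eq_concat a p'
      refine ⟨x :: q, (isNewPalindrome_cons_episturmian_iff_of_ne hx ?_).2 hp⟩
      rw [episturmian_cons_of_ne hx, hq, List.cons_append]

theorem IsNewPalindrome.cons_episturmian_concat (hx : x ≠ a) (h : IsNewPalindrome w x p) :
    IsNewPalindrome (a :: ψ a w ++ [x]) a (a :: ψ a p) where
  palindrome := cons_episturmian_palindrome_iff.2 h.palindrome
  suffix := by
    rw [← cons_episturmian_concat_of_ne hx]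
    exact cons_episturmian_suffix_iff.2 h.suffix
  not_infix hinf := by
    rcases List.infix_concat_iff.1 hinf with hsuf | hinf
    · obtain ⟨t, ht⟩ := exists_cons_episturmian_eq_concat a p
      rw [ht, List.suffix_concat_iff] at hsuf
      simp [hx.symm] at hsuf
    · exact h.not_infix (cons_episturmian_infix_iff.1 hinf)

theorem rich_cons_episturmian_iff : Rich (a :: ψ a w) ↔ Rich w := by
  induction w using List.reverseRecOn with
  | nil =>
    exact iff_of_true (rich_nil.cons (.singleton a) (List.prefix_refl [a]) (by simp)) rich_nil
  | append_singleton w x ih =>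
    have hconcat : Rich (a :: ψ a w ++ [x]) ↔ Rich (w ++ [x]) := by
      rw [rich_concat_iff, rich_concat_iff, ih, exists_isNewPalindrome_cons_episturmian_iff]
    by_cases hx : x = a
    · subst hx
      rwa [cons_episturmian_concat_self]
    · rw [cons_episturmian_concat_of_ne hx, rich_concat_iff, hconcat, and_iff_left_iff_imp]
      intro hr
      obtain ⟨-, p, hp⟩ := rich_concat_iff.1 hr
      exact ⟨_, hp.cons_episturmian_concat hx⟩

theorem rich_cons_episturmian_concat_iff : Rich (a :: ψ a w ++ [x]) ↔ Rich (w ++ [x]) := by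
  rw [rich_concat_iff, rich_concat_iff, rich_cons_episturmian_iff,
    exists_isNewPalindrome_cons_episturmian_iff]

end Episturmian

section ForcedExtension

variable {α β : Type*} {l u v w U : List α} {z : α}

/-- Reading `u` after `w` letter by letter, every letter is the only one that keeps the word read
so far rich, and no word to which a letter of `u` is added is a palindrome. Only the first
condition concerns `TwoWays`; the second one makes the property stable under enlarging the
alphabet and under the morphism `episturmian a`. -/
def ForcedExtension : List α → List α → Prop
  | _, [] => True
  | w, y :: u =>
    ¬ w.Palindrome ∧ (∀ x, Rich (w ++ [x]) → x = y) ∧ ForcedExtension (w ++ [y]) u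

instance ForcedExtension.decidable [DecidableEq α] [Fintype α] :
    (w u : List α) → Decidable (ForcedExtension w u)
  | _, [] => isTrue trivial
  | w, y :: u =>
    have := ForcedExtension.decidable (w ++ [y]) u
    inferInstanceAs <| Decidable <|
      ¬ w.Palindrome ∧ (∀ x, Rich (w ++ [x]) → x = y) ∧ ForcedExtension (w ++ [y]) u

theorem ForcedExtension.length_le (h : ForcedExtension w u) (hr : Rich (w ++ U))
    (ht : TwoWays (w ++ U)) : u.length ≤ U.length := by
  induction u generalizing w U with
  | nil => exact Nat.zero_le _
  | cons y u ih =>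
    obtain ⟨-, hy, hu⟩ := h
    rcases U with _ | ⟨x, U⟩
    · obtain ⟨x, x', hne, hx, hx'⟩ := ht
      rw [List.append_nil] at hx hx'
      exact absurd ((hy x hx).trans (hy x' hx').symm) hne
    · rw [List.append_cons] at hr ht
      obtain rfl : x = y := hy x (hr.of_prefix (List.prefix_append _ _))
      exact Nat.succ_le_succ (ih hu hr ht)

theorem not_palindrome_append_of_disjoint (hd : l.Disjoint v) (hv : ¬ v.Palindrome) :
    ¬ (l ++ v).Palindrome := by
  rcases l with _ | ⟨z, l⟩
  · exact hv
  rcases List.eq_nil_or_concat' v with rfl | ⟨v, y, rfl⟩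
  · exact absurd .nil hv
  intro h
  have hrev := h.reverse_eq
  rw [← List.append_assoc, List.reverse_concat] at hrev
  have hyz : y = z := (List.cons.inj hrev).1
  exact hd List.mem_cons_self (by simp [hyz])

theorem not_rich_append_concat_of_disjoint (hd : l.Disjoint v) (hv : ¬ v.Palindrome)
    (hz : z ∈ l) : ¬ Rich (l ++ v ++ [z]) := by
  intro hr
  obtain ⟨-, p, hp⟩ := rich_concat_iff.1 hr
  rcases hp.notMem_or_exists_suffix with hzl | ⟨q, hq, ⟨s, hs⟩, -⟩
  · exact hzl (List.mem_append_left _ hz)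
  rcases List.append_eq_append_iff.1 hs with ⟨r, rfl, hrv⟩ | ⟨r, -, rfl⟩
  · rcases r with _ | ⟨c, r⟩
    · rw [List.nil_append] at hrv
      exact hd hz (hrv ▸ List.mem_cons_self)
    · obtain ⟨-, rfl⟩ := List.cons.inj hrv
      have hdr : r.Disjoint v := List.disjoint_of_subset_left (by simp) hd
      exact not_palindrome_append_of_disjoint hdr hv hq
  · exact hd hz (by simp)

theorem rich_append_of_disjoint (hl : l.Nodup) (hd : l.Disjoint v) (hv : Rich v) :
    Rich (l ++ v) := by
  induction l with
  | nil => exact hv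
  | cons z l ih =>
    rw [List.nodup_cons] at hl
    rw [List.disjoint_cons_left] at hd
    refine (ih hl.2 hd.2).cons (.singleton z) (by simp) fun h => ?_
    rcases List.mem_append.1 ((List.singleton_infix_iff _ _).1 h) with h | h
    · exact hl.1 h
    · exact hd.1 h

theorem disjoint_map_of_forall_notMem_range {f : β → α} (hl : ∀ x ∈ l, x ∉ Set.range f)
    (w : List β) : l.Disjoint (w.map f) := by
  intro x hx hxw
  obtain ⟨y, -, rfl⟩ := List.mem_map.1 hxw
  exact hl _ hx (Set.mem_range_self y)

theorem ForcedExtension.append_map {f : β → α} (hf : Function.Injective f)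
    (hl : ∀ x, x ∈ l ↔ x ∉ Set.range f) {w u : List β} (h : ForcedExtension w u) :
    ForcedExtension (l ++ w.map f) (u.map f) := by
  induction u generalizing w with
  | nil => trivial
  | cons y u ih =>
    obtain ⟨hw, hy, hu⟩ := h
    have hd := disjoint_map_of_forall_notMem_range (fun x => (hl x).1) w
    have hwf : ¬ (w.map f).Palindrome := by
      rwa [List.Palindrome.iff_reverse_eq, ← List.map_reverse,
        (List.map_injective_iff.2 hf).eq_iff, ← List.Palindrome.iff_reverse_eq]
    refine ⟨not_palindrome_append_of_disjoint hd hwf, fun x hx => ?_, by simpa using ih hu⟩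
    have hxl : x ∉ l := fun hxl => not_rich_append_concat_of_disjoint hd hwf hxl hx
    obtain ⟨b, rfl⟩ := not_not.1 ((hl x).not.1 hxl)
    rw [List.append_assoc] at hx
    have hb : Rich ((w ++ [b]).map f) := by
      simpa using hx.of_suffix (List.suffix_append _ _)
    rw [hy b ((rich_map_iff hf).1 hb)]

end ForcedExtension

section Iteration

local notation "ψ" => episturmian

theorem not_palindrome_cons_cons_of_infix {α : Type*} [DecidableEq α] {a b : α} {t w : List α}
    (hb : b ≠ a) (h : a :: t <:+: a :: ψ a w) : ¬ (b :: b :: a :: t).Palindrome := by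
  intro hp
  have hbb : [b, b] <:+ b :: b :: a :: t := by
    rw [← hp.reverse_eq]
    exact ⟨t.reverse ++ [a], by simp⟩
  rw [List.suffix_cons_iff, List.suffix_cons_iff] at hbb
  rcases hbb with hbb | hbb | hbb
  · simp at hbb
  · simp [hb] at hbb
  · exact not_pair_infix_cons_episturmian hb hb (hbb.isInfix.trans h)

theorem not_rich_cons_cons_cons_episturmian_append_pair {α : Type*} [DecidableEq α] {a b : α}
    {w : List α} (hb : b ≠ a) (hw : ¬ w.Palindrome) :
    ¬ Rich (b :: b :: a :: ψ a w ++ [b] ++ [b]) := by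
  intro hr
  obtain ⟨-, p, hp⟩ := rich_concat_iff.1 hr
  obtain hbn | ⟨q, hq, hqs, hqn⟩ := hp.notMem_or_exists_suffix
  · simp at hbn
  have hqb : ∃ r, q = b :: r := by
    rcases List.suffix_concat_iff.1 hqs with h | ⟨s, hs, -⟩
    · simp at h
    rcases List.eq_nil_or_concat' q with rfl | ⟨r, y, rfl⟩
    · exact absurd ⟨[], a :: ψ a w ++ [b], by simp⟩ hqn
    rw [← List.cons_append] at hs
    obtain rfl : y = b := by simpa using (List.append_inj' hs rfl).2
    exact ⟨r.reverse, by rw [← hq.reverse_eq, List.reverse_concat]⟩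
  obtain ⟨r, rfl⟩ := hqb
  simp only [List.cons_append] at hqs
  rcases List.suffix_cons_iff.1 hqs with h | h
  · obtain rfl : r = a :: ψ a w ++ [b] := by simpa using h
    exact hw (cons_episturmian_palindrome_iff.1 (palindrome_cons_concat_iff.1 hq))
  rcases List.suffix_cons_iff.1 h with h | h
  · simp [hb] at h
  · have hbb : [b, b] <:+: a :: ψ a (w ++ [b]) := by
      rw [cons_episturmian_concat_of_ne hb]
      exact List.IsInfix.trans ⟨[], r, rfl⟩ (h.isInfix.trans (List.prefix_append _ [a]).isInfix)
    exact not_pair_infix_cons_episturmian hb hb hbb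

theorem Rich.cons_cons_cons_cons_episturmian {α : Type*} [DecidableEq α] {a b : α} {w : List α}
    (hb : b ≠ a) (h : Rich (b :: w)) : Rich (a :: b :: b :: a :: ψ a w) := by
  have hr : Rich (b :: a :: ψ a w) := by
    have := rich_cons_episturmian_iff (a := a).2 h
    rw [episturmian_cons_of_ne hb] at this
    exact this.of_suffix (List.suffix_cons _ _)
  have hbb : ¬ [b, b] <:+: b :: a :: ψ a w := by
    rw [List.infix_cons_iff]
    simp [hb, not_pair_infix_cons_episturmian hb hb]
  have habba : ¬ [a, b, b, a] <:+: b :: b :: a :: ψ a w := by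
    rw [List.infix_cons_iff]
    rintro (h | h)
    · exact hb (List.cons_prefix_cons.1 h).1.symm
    · exact hbb (List.IsInfix.trans ⟨[a], [a], rfl⟩ h)
  have hbbpal : [b, b].Palindrome := .of_reverse_eq rfl
  exact (hr.cons hbbpal (by simp) hbb).cons (.cons_concat a hbbpal) (by simp) habba

theorem ForcedExtension.cons_cons_cons_episturmian {a : Bool} {w u : List Bool}
    (h : ForcedExtension w u) : ForcedExtension ((!a) :: (!a) :: a :: ψ a w) (ψ a u) := by
  induction u generalizing w with
  | nil => trivial
  | cons y u ih =>
    obtain ⟨hw, hy, hu⟩ := h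
    have ha : (!a) ≠ a := Bool.not_ne_self a
    have hnp := not_palindrome_cons_cons_of_infix ha (List.infix_refl (a :: ψ a w))
    have hunique (x : Bool) (hx : Rich ((!a) :: (!a) :: a :: ψ a w ++ [x])) : x = y :=
      hy x (rich_cons_episturmian_concat_iff.1 (hx.of_suffix ⟨[!a, !a], rfl⟩))
    replace ih := ih hu
    by_cases hya : y = a
    · subst hya
      rw [episturmian_cons_self]
      rw [cons_episturmian_concat_self] at ih
      exact ⟨hnp, hunique, ih⟩
    · rw [episturmian_cons_of_ne hya]
      rw [cons_episturmian_concat_of_ne hya] at ih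
      obtain rfl : y = !a := Bool.eq_not.2 hya
      refine ⟨hnp, hunique, ?_, fun x hx => ?_, ih⟩
      · refine not_palindrome_cons_cons_of_infix ha (w := w ++ [!a]) ?_
        rw [cons_episturmian_concat_of_ne ha]
        exact (List.prefix_append _ _).isInfix
      · by_contra hxa
        obtain rfl : x = !a := Bool.eq_not.2 hxa
        exact not_rich_cons_cons_cons_episturmian_append_pair ha hw hx

/-- A word `w` with a forced continuation `u`, as it arises after `n` steps of the iteration in
`ForcedPair.succ`. Such a step sends `(w.count a + 1, w.count (!a) + 3)` and
`(u.count a, u.count (!a))` to their images under `(p, q) ↦ (q, p + q)`, with the roles of the two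
letters exchanged, so every linear relation between the two pairs persists with a right-hand side
that evolves like the Fibonacci sequence. -/
structure ForcedPair (n : ℕ) (a : Bool) (w u : List Bool) : Prop where
  rich : Rich ((!a) :: (w ++ u))
  forced : ForcedExtension w u
  count_self : 3 * (w.count a + 1) + n.fib = 13 * u.count a
  count_not : 3 * (w.count (!a) + 3) + (n + 1).fib = 13 * u.count (!a)

theorem ForcedPair.succ {n : ℕ} {a : Bool} {w u : List Bool} (h : ForcedPair n a w u) :
    ForcedPair (n + 1) (!a) ((!a) :: (!a) :: a :: ψ a w) (ψ a u) where
  rich := by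
    simpa [episturmian_append] using h.rich.cons_cons_cons_cons_episturmian (Bool.not_ne_self a)
  forced := h.forced.cons_cons_cons_episturmian
  count_self := by
    have hnot := h.count_not
    simp only [List.count_cons_self, ne_eq, Bool.eq_not_self, not_false_eq_true,
      List.count_cons_of_ne, Bool.not_eq_eq_eq_not, count_episturmian_of_ne]
    omega
  count_not := by
    have hself := h.count_self
    have hnot := h.count_not
    have hw := List.count_not_add_count w a
    have hu := List.count_not_add_count u a
    simp only [Bool.not_not, ne_eq, Bool.not_eq_eq_eq_not, Bool.eq_not_self, not_false_eq_true,
      List.count_cons_of_ne, List.count_cons_self, count_self_episturmian, Nat.fib_add_two]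
    omega

theorem exists_forcedPair (n : ℕ) : ∃ a w u, ForcedPair n a w u ∧ n ≤ w.length := by
  induction n with
  | zero =>
    -- This pair, with letter counts (12, 14) and (3, 4), was found by a computer search.
    exact ⟨true,
      [true, false, true, false, true, true, true, false, false, false, true, true, false,
        false, false, true, true, false, false, true, true, false, false, false, false, true],
      [true, false, false, true, true, false, false],
      ⟨by decide +kernel, by decide +kernel, by decide, by decide⟩, Nat.zero_le _⟩
  | succ n ih =>
    obtain ⟨a, w, u, h, hn⟩ := ih
    refine ⟨_, _, _, h.succ, ?_⟩
    have hle : w.length ≤ (ψ a w).length :=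
      count_self_episturmian.symm.trans_le List.count_le_length
    simp only [List.length_cons]
    omega

theorem ForcedPair.length_eq {n : ℕ} {a : Bool} {w u : List Bool} (h : ForcedPair n a w u) :
    3 * (w.length + 4) + (n + 2).fib = 13 * u.length := by
  have hself := h.count_self
  have hnot := h.count_not
  have hw := List.count_not_add_count w a
  have hu := List.count_not_add_count u a
  rw [Nat.fib_add_two]
  omega

end Iteration

theorem stmt19_general {A : Type*} [Finite A] [Nontrivial A] (m : ℕ) :
    ∃ n : ℕ, m < n ∧ ∃ w : List A, Rich w ∧ w.length = n ∧
      ∀ u : List A, Rich (w ++ u) → TwoWays (w ++ u) → 3 / 13 * (n : ℝ) ≤ (u.length : ℝ) := by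
  classical
  cases nonempty_fintype A
  obtain ⟨f⟩ : Nonempty (Bool ↪ A) :=
    Function.Embedding.nonempty_of_card_le Fintype.one_lt_card
  let l : List A := (Finset.univ.filter fun z => z ∉ Set.range f).toList
  have hl (z : A) : z ∈ l ↔ z ∉ Set.range f := by simp [l]
  obtain ⟨a, w, u, h, hw⟩ := exists_forcedPair (m + 3 * l.length + 1)
  have hd : l.Disjoint (w.map f) := disjoint_map_of_forall_notMem_range (fun z => (hl z).1) w
  have hwr : Rich w := (h.rich.of_suffix (List.suffix_cons _ _)).of_prefix (List.prefix_append _ _)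
  refine ⟨(l ++ w.map f).length, ?_, l ++ w.map f, ?_, rfl, fun U hr ht => ?_⟩
  · simp only [List.length_append, List.length_map]
    omega
  · exact rich_append_of_disjoint (Finset.nodup_toList _) hd ((rich_map_iff f.injective).2 hwr)
  · have hu : u.length ≤ U.length := by
      simpa using (h.forced.append_map f.injective hl).length_le hr ht
    have hfib := Nat.le_fib_add_one (m + 3 * l.length + 1 + 2)
    have hlen := h.length_eq
    have hmain : 3 * (l.length + w.length) ≤ 13 * U.length := by omega
    rify at hmain
    simp only [List.length_append, List.length_map, Nat.cast_add]
    linarith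

theorem stmt19 {A : Type*} [Fintype A] [Nontrivial A]
    (c : ℝ) (hc : 0 < c) (m : ℕ) (hm : 0 < m) :
    ∃ n : ℕ, m < n ∧ ∃ w : List A, Rich w ∧ w.length = n ∧
      ∀ u : List A, Rich (w ++ u) → TwoWays (w ++ u) →
        (2 / 9 - c) * (n : ℝ) ≤ (u.length : ℝ) := by
  obtain ⟨n, hmn, w, hw, hwn, h⟩ := stmt19_general (A := A) m
  exact ⟨n, hmn, w, hw, hwn, fun u hr ht =>
    (mul_le_mul_of_nonneg_right (by linarith) n.cast_nonneg).trans (h u hr ht)⟩
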